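/- Let μ, ν be probability measures on ℝ^d with finite first moments. Then W₁(μ,ν) = sup{ ∫ f d(μ−ν) : f : ℝ^d → ℝ with Lipschitz constant at most 1 and f integrable w.r.t. |μ−ν| }. -/

import Mathlib

open MeasureTheory

/-- The `p`-Wasserstein distance, defined as the infimum over couplings of the `p`-th root of
the `p`-th cost. -/
noncomputable def Wp {d : ℕ} (p : ℝ)
    (μ ν : Measure (EuclideanSpace ℝ (Fin d))) : ℝ :=
  sInf {c : ℝ | ∃ γ : Measure (EuclideanSpace ℝ (Fin d) × EuclideanSpace ℝ (Fin d)),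
    IsProbabilityMeasure γ ∧ γ.map Prod.fst = μ ∧ γ.map Prod.snd = ν ∧
    c = (∫ z, ‖z.1 - z.2‖ ^ p ∂γ) ^ (1 / p)}

/-!
Integrating `f x - f y ≤ dist x y` against a coupling shows that every coupling costs at least the
dual supremum `S`. For the converse, a 1-Lipschitz function fits between `φ` and `-ψ` whenever
`φ x + ψ y ≤ dist x y`, so `S` also bounds the dual problem over pairs of potentials. Hence a
nonnegative payoff on `X × X` cannot be superhedged at a negative cost by positions `φ x + ψ y`,
priced at their means, together with units of `dist`, priced at `S`; the least superhedging cost is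
a sublinear functional. By Hahn–Banach it dominates a linear functional, which is then positive,
has the right marginals, and is at most `S` at every `h ≤ dist`. Extended to the Stone–Čech
compactification, this functional is a measure by Riesz–Markov–Kakutani; tightness of the marginals
keeps its mass off the remainder, so it is a coupling, of cost at most `S`.
-/

open Filter Topology BoundedContinuousFunction CompactlySupported
open scoped ENNReal NNReal Pointwise

section TightFunctionals

variable {Z W : Type*} [TopologicalSpace Z] [TopologicalSpace W]
  [MeasurableSpace W] [BorelSpace W]

theorem exists_regular_forall_integral_eq_compContinuous [CompactSpace W] [T2Space W]
    (Λ : (Z →ᵇ ℝ) →ₚ[ℝ] ℝ) (j : C(Z, W)) :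
    ∃ m : Measure W, m.Regular ∧ IsFiniteMeasure m ∧
      ∀ G : W →ᵇ ℝ, ∫ w, G w ∂m = Λ (G.compContinuous j) := by
  let pullback : C_c(W, ℝ) →ₗ[ℝ] Z →ᵇ ℝ :=
    { toFun := fun G => G.toBoundedContinuousFunction.compContinuous j
      map_add' := fun _ _ => rfl
      map_smul' := fun _ _ => rfl }
  let Γ : C_c(W, ℝ) →ₚ[ℝ] ℝ :=
    .mk₀ (Λ.toLinearMap ∘ₗ pullback) fun _ hG => Λ.map_nonneg fun z => hG (j z)
  refine ⟨RealRMK.rieszMeasure Γ, inferInstance, inferInstance, fun G => ?_⟩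
  exact RealRMK.integral_rieszMeasure Γ ⟨G.toContinuousMap, .of_compactSpace _⟩

theorem measure_compl_image_le_of_forall_le [CompactSpace W] [T2Space W]
    {Λ : (Z →ᵇ ℝ) → ℝ} {j : C(Z, W)} {m : Measure W} [m.Regular] [IsFiniteMeasure m]
    (hm : ∀ G : W →ᵇ ℝ, ∫ w, G w ∂m = Λ (G.compContinuous j)) {K : Set Z} (hK : IsCompact K)
    {ε : ℝ} (hΛ : ∀ h : Z →ᵇ ℝ, 0 ≤ h → h ≤ 1 → Set.EqOn h 0 K → Λ h ≤ ε) :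
    m (j '' K)ᶜ ≤ ENNReal.ofReal ε := by
  rw [(hK.image j.continuous).isClosed.isOpen_compl.measure_eq_biSup_integral_continuous,
    compl_compl]
  refine iSup_le fun f => iSup_le fun hf => iSup_le fun hfK => iSup_le fun hf0 => iSup_le fun hf1 =>
    ENNReal.ofReal_le_ofReal ?_
  let G : W →ᵇ ℝ := .mkOfCompact ⟨f, hf⟩
  calc ∫ w, f w ∂m = Λ (G.compContinuous j) := hm G
    _ ≤ ε := hΛ _ (fun z => hf0 (j z)) (fun z => hf1 (j z))
      fun z hz => hfK (Set.mem_image_of_mem j hz)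

theorem exists_map_eq_of_isSigmaCompact [T2Space W] [MeasurableSpace Z] [BorelSpace Z]
    {j : Z → W} (hj : IsEmbedding j) {T : Set Z} (hT : IsSigmaCompact T) {m : Measure W}
    (hm : m (j '' T)ᶜ = 0) : ∃ γ : Measure Z, γ.map j = m := by
  obtain ⟨K, hK, hKT⟩ := hT.image hj.continuous
  have hjT : MeasurableSet (j '' T) := hKT ▸ .iUnion fun n => (hK n).measurableSet
  have hrange : Set.range (j ∘ ((↑) : T → Z)) = j '' T := by
    rw [Set.range_comp, Subtype.range_coe]
  have he : MeasurableEmbedding (j ∘ ((↑) : T → Z)) :=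
    (hj.comp .subtypeVal).measurableEmbedding (hrange ▸ hjT)
  refine ⟨(m.comap (j ∘ (↑))).map ((↑) : T → Z), ?_⟩
  rw [Measure.map_map hj.continuous.measurable measurable_subtype_coe, he.map_comap, hrange]
  exact Measure.restrict_eq_self_of_ae_mem hm

theorem exists_compContinuous_stoneCechUnit_eq (g : Z →ᵇ ℝ) :
    ∃ G : StoneCech Z →ᵇ ℝ, G.compContinuous ⟨stoneCechUnit, continuous_stoneCechUnit⟩ = g := by
  let g' : Z → Metric.closedBall (0 : ℝ) ‖g‖ := fun z =>
    ⟨g z, mem_closedBall_zero_iff.2 (g.norm_coe_le_norm z)⟩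
  have hg' : Continuous g' := g.continuous.subtype_mk _
  refine ⟨.mkOfCompact ⟨fun w => (stoneCechExtend hg' w).val,
    continuous_subtype_val.comp (continuous_stoneCechExtend hg')⟩, ?_⟩
  ext z
  exact congrArg Subtype.val (stoneCechExtend_stoneCechUnit hg' z)

theorem exists_measure_forall_integral_eq_of_tight [T35Space Z] [MeasurableSpace Z] [BorelSpace Z]
    (Λ : (Z →ᵇ ℝ) →ₚ[ℝ] ℝ)
    (hΛ : ∀ ε > 0, ∃ K, IsCompact K ∧
      ∀ h : Z →ᵇ ℝ, 0 ≤ h → h ≤ 1 → Set.EqOn h 0 K → Λ h ≤ ε) :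
    ∃ γ : Measure Z, IsFiniteMeasure γ ∧ ∀ g : Z →ᵇ ℝ, ∫ z, g z ∂γ = Λ g := by
  borelize (StoneCech Z)
  let j : C(Z, StoneCech Z) := ⟨stoneCechUnit, continuous_stoneCechUnit⟩
  obtain ⟨m, _, _, hm⟩ := exists_regular_forall_integral_eq_compContinuous Λ j
  choose! K hK hΛK using hΛ
  let T : Set Z := ⋃ n : ℕ, K (1 / (n + 1))
  have hT : IsSigmaCompact T :=
    isSigmaCompact_iUnion_of_isCompact _ fun n => hK _ Nat.one_div_pos_of_nat
  have hmT : m (j '' T)ᶜ = 0 := by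
    have hle (n : ℕ) : m (j '' T)ᶜ ≤ ENNReal.ofReal (1 / (n + 1)) :=
      (measure_mono (Set.compl_subset_compl.2 (Set.image_mono (Set.subset_iUnion _ n)))).trans
        (measure_compl_image_le_of_forall_le hm (hK _ Nat.one_div_pos_of_nat)
          (hΛK _ Nat.one_div_pos_of_nat))
    have hlim : Tendsto (fun n : ℕ => ENNReal.ofReal (1 / (n + 1))) atTop (𝓝 0) := by
      simpa using ENNReal.tendsto_ofReal tendsto_one_div_add_atTop_nhds_zero_nat
    exact le_antisymm (ge_of_tendsto' hlim hle) zero_le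
  obtain ⟨γ, rfl⟩ := exists_map_eq_of_isSigmaCompact isEmbedding_stoneCechUnit hT hmT
  have hj : AEMeasurable j γ := j.continuous.measurable.aemeasurable
  refine ⟨γ, Measure.isFiniteMeasure_of_map hj, fun g => ?_⟩
  obtain ⟨G, rfl⟩ := exists_compContinuous_stoneCechUnit_eq g
  exact (integral_map hj G.continuous.aestronglyMeasurable).symm.trans (hm G)

end TightFunctionals

theorem exists_isCompact_measureReal_compl_le {Z : Type*} [TopologicalSpace Z] [MeasurableSpace Z]
    {μ : Measure Z} (hμ : IsTightMeasureSet {μ}) {ε : ℝ} (hε : 0 < ε) :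
    ∃ K, IsCompact K ∧ μ.real Kᶜ ≤ ε := by
  obtain ⟨K, hK, hμK⟩ := isTightMeasureSet_iff_exists_isCompact_measure_compl_le.1 hμ
    (ENNReal.ofReal ε) (ENNReal.ofReal_pos.2 hε)
  exact ⟨K, hK, ENNReal.toReal_le_of_le_ofReal hε.le (hμK μ rfl)⟩

theorem lintegral_ofReal_le_of_forall_boundedContinuous_le {Z : Type*} [TopologicalSpace Z]
    [MeasurableSpace Z] [OpensMeasurableSpace Z] {γ : Measure Z} [IsFiniteMeasure γ] {c : Z → ℝ}
    (hc : Continuous c) (hc0 : 0 ≤ c) {S : ℝ}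
    (hγ : ∀ h : Z →ᵇ ℝ, (∀ z, h z ≤ c z) → ∫ z, h z ∂γ ≤ S) :
    ∫⁻ z, ENNReal.ofReal (c z) ∂γ ≤ ENNReal.ofReal S := by
  have htrunc0 (n : ℕ) (z : Z) : 0 ≤ min (c z) n := le_min (hc0 z) n.cast_nonneg
  let trunc (n : ℕ) : Z →ᵇ ℝ :=
    .ofNormedAddCommGroup (fun z => min (c z) n) (by fun_prop) n fun z => by
      rw [Real.norm_of_nonneg (htrunc0 n z)]
      exact min_le_right _ _
  have hlim (z : Z) : Tendsto (fun n => ENNReal.ofReal (trunc n z)) atTop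
      (𝓝 (ENNReal.ofReal (c z))) := by
    refine tendsto_const_nhds.congr' ?_
    filter_upwards [eventually_ge_atTop ⌈c z⌉₊] with n hn
    exact congrArg ENNReal.ofReal (min_eq_left (Nat.ceil_le.1 hn)).symm
  calc ∫⁻ z, ENNReal.ofReal (c z) ∂γ
      = ∫⁻ z, liminf (fun n => ENNReal.ofReal (trunc n z)) atTop ∂γ :=
        lintegral_congr fun z => (hlim z).liminf_eq.symm
    _ ≤ liminf (fun n => ∫⁻ z, ENNReal.ofReal (trunc n z) ∂γ) atTop :=
        lintegral_liminf_le fun n => (trunc n).continuous.measurable.ennreal_ofReal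
    _ ≤ ENNReal.ofReal S := by
        refine liminf_le_of_frequently_le' (Frequently.of_forall fun n => ?_)
        rw [← ofReal_integral_eq_lintegral_ofReal ((trunc n).integrable γ)
          (ae_of_all _ (htrunc0 n))]
        exact ENNReal.ofReal_le_ofReal (hγ (trunc n) fun z => min_le_left _ _)

section Kantorovich

variable {X Y : Type*} [MeasurableSpace X] [MeasurableSpace Y]

/-- `γ` is a coupling (transport plan) of `μ` and `ν`: its marginals are `μ` and `ν`. -/
structure IsCoupling (γ : Measure (X × Y)) (μ : Measure X) (ν : Measure Y) : Prop where
  map_fst : γ.map Prod.fst = μ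
  map_snd : γ.map Prod.snd = ν

/-- `S` bounds the Kantorovich dual problem for the cost `c` from above. The potentials are
only required to be integrable, so that they may be indicators of measurable sets. -/
def IsDualBound (μ : Measure X) (ν : Measure Y) (c : X × Y → ℝ) (S : ℝ) : Prop :=
  ∀ (φ : X → ℝ) (ψ : Y → ℝ), Integrable φ μ → Integrable ψ ν →
    (∀ x y, φ x + ψ y ≤ c (x, y)) → (∫ x, φ x ∂μ) + ∫ y, ψ y ∂ν ≤ S

/-- The costs of the static superhedges of the payoff `h`: positions `φ` and `ψ` are bought at
their `μ`- and `ν`-means, and `t ≥ 0` units of `c` at the price `S` each. The infimum of these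
costs is the sublinear functional to which Hahn–Banach is applied. -/
def superhedgingCosts (μ : Measure X) (ν : Measure Y) (c : X × Y → ℝ) (S : ℝ)
    (h : X × Y → ℝ) : Set ℝ :=
  {r | ∃ (φ : X → ℝ) (ψ : Y → ℝ) (t : ℝ), Integrable φ μ ∧ Integrable ψ ν ∧ 0 ≤ t ∧
    (∀ x y, h (x, y) ≤ φ x + ψ y + t * c (x, y)) ∧
    r = (∫ x, φ x ∂μ) + (∫ y, ψ y ∂ν) + t * S}

variable {μ : Measure X} {ν : Measure Y}

theorem IsCoupling.isProbabilityMeasure [IsProbabilityMeasure μ] {γ : Measure (X × Y)}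
    (hγ : IsCoupling γ μ ν) : IsProbabilityMeasure γ :=
  (Measure.isProbabilityMeasure_map_iff measurable_fst.aemeasurable).1
    (hγ.map_fst.symm ▸ inferInstance)

variable {c h h' : X × Y → ℝ} {S r r' : ℝ}

theorem integral_add_integral_mem_superhedgingCosts {φ : X → ℝ} {ψ : Y → ℝ}
    (hφ : Integrable φ μ) (hψ : Integrable ψ ν) (hh : ∀ x y, h (x, y) ≤ φ x + ψ y) :
    (∫ x, φ x ∂μ) + ∫ y, ψ y ∂ν ∈ superhedgingCosts μ ν c S h :=
  ⟨φ, ψ, 0, hφ, hψ, le_rfl, by simpa using hh, by ring⟩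

theorem mem_superhedgingCosts_of_le_cost (hh : ∀ z, h z ≤ c z) :
    S ∈ superhedgingCosts μ ν c S h :=
  ⟨0, 0, 1, integrable_zero _ _ _, integrable_zero _ _ _, zero_le_one,
    fun x y => by simpa using hh (x, y), by simp⟩

theorem mem_superhedgingCosts_of_le_const [IsProbabilityMeasure μ] {C : ℝ} (hh : ∀ z, h z ≤ C) :
    C ∈ superhedgingCosts μ ν c S h := by
  simpa using integral_add_integral_mem_superhedgingCosts (c := c) (S := S)
    (integrable_const (μ := μ) C) (integrable_zero Y ℝ ν) fun x y => by simpa using hh (x, y)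

theorem add_mem_superhedgingCosts (hr : r ∈ superhedgingCosts μ ν c S h)
    (hr' : r' ∈ superhedgingCosts μ ν c S h') :
    r + r' ∈ superhedgingCosts μ ν c S (h + h') := by
  obtain ⟨φ, ψ, t, hφ, hψ, ht, hh, rfl⟩ := hr
  obtain ⟨φ', ψ', t', hφ', hψ', ht', hh', rfl⟩ := hr'
  refine ⟨φ + φ', ψ + ψ', t + t', hφ.add hφ', hψ.add hψ', add_nonneg ht ht', fun x y => ?_, ?_⟩
  · simp only [Pi.add_apply]
    linarith [hh x y, hh' x y]
  · rw [integral_add' hφ hφ', integral_add' hψ hψ']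
    ring

theorem mul_mem_superhedgingCosts {a : ℝ} (ha : 0 ≤ a) (hr : r ∈ superhedgingCosts μ ν c S h) :
    a * r ∈ superhedgingCosts μ ν c S (a • h) := by
  obtain ⟨φ, ψ, t, hφ, hψ, ht, hh, rfl⟩ := hr
  refine ⟨a • φ, a • ψ, a * t, hφ.smul a, hψ.smul a, mul_nonneg ha ht, fun x y => ?_, ?_⟩
  · simp only [Pi.smul_apply, smul_eq_mul]
    linarith [mul_le_mul_of_nonneg_left (hh x y) ha]
  · simp only [Pi.smul_apply, smul_eq_mul, integral_const_mul]
    ring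

theorem superhedgingCosts_smul {a : ℝ} (ha : 0 < a) :
    superhedgingCosts μ ν c S (a • h) = a • superhedgingCosts μ ν c S h := by
  refine Set.Subset.antisymm (fun r hr => ?_) ?_
  · have hr' := mul_mem_superhedgingCosts (inv_nonneg.2 ha.le) hr
    rw [inv_smul_smul₀ ha.ne'] at hr'
    exact (Set.mem_smul_set_iff_inv_smul_mem₀ ha.ne' _ _).2 hr'
  · rintro _ ⟨r, hr, rfl⟩
    exact mul_mem_superhedgingCosts ha.le hr

theorem integral_add_integral_nonneg [IsProbabilityMeasure μ] [IsProbabilityMeasure ν]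
    {φ : X → ℝ} {ψ : Y → ℝ} (hφ : Integrable φ μ) (hψ : Integrable ψ ν)
    (hφψ : ∀ x y, 0 ≤ φ x + ψ y) : 0 ≤ (∫ x, φ x ∂μ) + ∫ y, ψ y ∂ν :=
  calc 0 ≤ ∫ z : X × Y, φ z.1 + ψ z.2 ∂μ.prod ν := integral_nonneg fun z => hφψ z.1 z.2
    _ = (∫ x, φ x ∂μ) + ∫ y, ψ y ∂ν := by
      rw [integral_add (hφ.comp_fst ν) (hψ.comp_snd μ), integral_fun_fst, integral_fun_snd]
      simp

theorem IsDualBound.nonneg_of_mem_superhedgingCosts_zero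
    [IsProbabilityMeasure μ] [IsProbabilityMeasure ν] (hS : IsDualBound μ ν c S)
    (hr : r ∈ superhedgingCosts μ ν c S 0) : 0 ≤ r := by
  obtain ⟨φ, ψ, t, hφ, hψ, ht, hh, rfl⟩ := hr
  simp only [Pi.zero_apply] at hh
  obtain rfl | ht := ht.eq_or_lt
  · simpa using integral_add_integral_nonneg hφ hψ (by simpa using hh)
  · -- `0 ≤ φ + ψ + t * c` makes `(-φ / t, -ψ / t)` an admissible pair of potentials.
    have hscaled := hS (fun x => -t⁻¹ * φ x) (fun y => -t⁻¹ * ψ y) (hφ.const_mul _)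
      (hψ.const_mul _) fun x y => by
        rw [← mul_add, neg_mul, neg_le, ← div_eq_inv_mul, le_div_iff₀ ht]
        linarith [hh x y]
    rw [integral_const_mul, integral_const_mul, ← mul_add, neg_mul, neg_le, ← div_eq_inv_mul,
      le_div_iff₀ ht] at hscaled
    linarith

variable [TopologicalSpace X] [TopologicalSpace Y]

theorem IsDualBound.exists_linearMap_le_superhedgingCosts
    [IsProbabilityMeasure μ] [IsProbabilityMeasure ν] (hS : IsDualBound μ ν c S) :
    ∃ Λ : (X × Y →ᵇ ℝ) →ₗ[ℝ] ℝ,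
      ∀ h : X × Y →ᵇ ℝ, Λ h ∈ lowerBounds (superhedgingCosts μ ν c S h) := by
  have hne (h : X × Y →ᵇ ℝ) : (superhedgingCosts μ ν c S h).Nonempty :=
    ⟨‖h‖, mem_superhedgingCosts_of_le_const h.apply_le_norm⟩
  have hbdd (h : X × Y →ᵇ ℝ) : BddBelow (superhedgingCosts μ ν c S h) := by
    refine ⟨-‖h‖, fun r hr => ?_⟩
    have hneg : ‖h‖ ∈ superhedgingCosts μ ν c S (-h) :=
      mem_superhedgingCosts_of_le_const fun z => neg_le.1 (h.neg_norm_le_apply z)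
    have hsum := add_mem_superhedgingCosts hr hneg
    rw [add_neg_cancel] at hsum
    linarith [hS.nonneg_of_mem_superhedgingCosts_zero hsum]
  obtain ⟨Λ, -, hΛ⟩ := exists_extension_of_le_sublinear ⊥
    (fun h : X × Y →ᵇ ℝ => sInf (superhedgingCosts μ ν c S h))
    (fun a ha h => by
      rw [← smul_eq_mul, ← Real.sInf_smul_of_nonneg ha.le, ← superhedgingCosts_smul ha]
      rfl)
    (fun h h' => by
      rw [← csInf_add (hne h) (hbdd h) (hne h') (hbdd h')]
      refine csInf_le_csInf (hbdd _) ((hne h).add (hne h')) ?_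
      rintro _ ⟨r, hr, r', hr', rfl⟩
      exact add_mem_superhedgingCosts hr hr')
    (fun h => by
      obtain rfl : h = 0 := Subtype.ext h.2
      simpa [LinearPMap.map_zero] using
        Real.sInf_nonneg fun r => hS.nonneg_of_mem_superhedgingCosts_zero)
  exact ⟨Λ, fun h _ hr => (hΛ h).trans (csInf_le (hbdd h) hr)⟩

section DominatedFunctional

variable {Λ : (X × Y →ᵇ ℝ) →ₗ[ℝ] ℝ}

theorem apply_nonneg_of_le_superhedgingCosts
    (hΛ : ∀ h : X × Y →ᵇ ℝ, Λ h ∈ lowerBounds (superhedgingCosts μ ν c S h)) {h : X × Y →ᵇ ℝ}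
    (hh : 0 ≤ h) : 0 ≤ Λ h := by
  have hmem := integral_add_integral_mem_superhedgingCosts (c := c) (S := S) (h := ⇑(-h))
    (integrable_zero X ℝ μ) (integrable_zero Y ℝ ν) fun x y => by simpa using hh (x, y)
  simpa using hΛ (-h) hmem

theorem apply_eq_integral_add_integral_of_le_superhedgingCosts
    [OpensMeasurableSpace X] [OpensMeasurableSpace Y] [IsFiniteMeasure μ] [IsFiniteMeasure ν]
    (hΛ : ∀ h : X × Y →ᵇ ℝ, Λ h ∈ lowerBounds (superhedgingCosts μ ν c S h))
    {φ : X →ᵇ ℝ} {ψ : Y →ᵇ ℝ} {h : X × Y →ᵇ ℝ} (hh : ∀ x y, h (x, y) = φ x + ψ y) :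
    Λ h = (∫ x, φ x ∂μ) + ∫ y, ψ y ∂ν := by
  refine le_antisymm ?_ ?_
  · exact hΛ h (integral_add_integral_mem_superhedgingCosts (φ.integrable μ) (ψ.integrable ν)
      fun x y => (hh x y).le)
  · have hneg := hΛ (-h) (integral_add_integral_mem_superhedgingCosts (φ.integrable μ).neg
      (ψ.integrable ν).neg fun x y => by simp [hh, add_comm])
    simp only [Pi.neg_apply, integral_neg, map_neg] at hneg
    linarith

theorem exists_isCompact_apply_le_of_le_superhedgingCosts [T2Space X] [T2Space Y]
    [OpensMeasurableSpace X] [OpensMeasurableSpace Y] [IsFiniteMeasure μ] [IsFiniteMeasure ν]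
    (hμ : IsTightMeasureSet {μ}) (hν : IsTightMeasureSet {ν})
    (hΛ : ∀ h : X × Y →ᵇ ℝ, Λ h ∈ lowerBounds (superhedgingCosts μ ν c S h)) {ε : ℝ} (hε : 0 < ε) :
    ∃ K, IsCompact K ∧ ∀ h : X × Y →ᵇ ℝ, h ≤ 1 → Set.EqOn h 0 K → Λ h ≤ ε := by
  obtain ⟨K, hK, hμK⟩ := exists_isCompact_measureReal_compl_le hμ (half_pos hε)
  obtain ⟨L, hL, hνL⟩ := exists_isCompact_measureReal_compl_le hν (half_pos hε)
  have hK' := hK.measurableSet.compl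
  have hL' := hL.measurableSet.compl
  refine ⟨K ×ˢ L, hK.prod hL, fun h hh1 hh0 => ?_⟩
  have hhKL (x : X) (y : Y) :
      h (x, y) ≤ Kᶜ.indicator (fun _ => 1) x + Lᶜ.indicator (fun _ => 1) y := by
    by_cases hx : x ∈ K
    · by_cases hy : y ∈ L
      · simp [hx, hy, hh0 (Set.mk_mem_prod hx hy)]
      · simpa [hx, hy] using hh1 (x, y)
    · calc h (x, y) ≤ 1 := hh1 (x, y)
        _ ≤ _ := by simpa [hx] using Set.indicator_nonneg (fun _ _ => zero_le_one) y
  calc Λ h ≤ (∫ x, Kᶜ.indicator (fun _ => 1) x ∂μ) + ∫ y, Lᶜ.indicator (fun _ => 1) y ∂ν :=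
        hΛ h (integral_add_integral_mem_superhedgingCosts
          ((integrable_const 1).indicator hK') ((integrable_const 1).indicator hL') hhKL)
    _ = μ.real Kᶜ + ν.real Lᶜ := by
        rw [integral_indicator_const _ hK', integral_indicator_const _ hL']
        simp
    _ ≤ ε := by linarith

end DominatedFunctional

theorem isCoupling_of_forall_integral_eq [HasOuterApproxClosed X] [HasOuterApproxClosed Y]
    [BorelSpace X] [BorelSpace Y] [IsFiniteMeasure μ] [IsFiniteMeasure ν]
    {γ : Measure (X × Y)} [IsFiniteMeasure γ]
    (hγ : ∀ (φ : X →ᵇ ℝ) (ψ : Y →ᵇ ℝ),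
      ∫ z, φ z.1 + ψ z.2 ∂γ = (∫ x, φ x ∂μ) + ∫ y, ψ y ∂ν) :
    IsCoupling γ μ ν where
  map_fst := ext_of_forall_integral_eq_of_IsFiniteMeasure fun φ => by
    rw [integral_map measurable_fst.aemeasurable φ.continuous.aestronglyMeasurable]
    simpa using hγ φ 0
  map_snd := ext_of_forall_integral_eq_of_IsFiniteMeasure fun ψ => by
    rw [integral_map measurable_snd.aemeasurable ψ.continuous.aestronglyMeasurable]
    simpa using hγ 0 ψ

theorem IsDualBound.exists_isCoupling_lintegral_le [PolishSpace X] [PolishSpace Y]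
    [BorelSpace X] [BorelSpace Y] [IsProbabilityMeasure μ] [IsProbabilityMeasure ν]
    (hc : Continuous c) (hc0 : 0 ≤ c) (hS : IsDualBound μ ν c S) :
    ∃ γ, IsCoupling γ μ ν ∧ ∫⁻ z, ENNReal.ofReal (c z) ∂γ ≤ ENNReal.ofReal S := by
  obtain ⟨Λ, hΛ⟩ := hS.exists_linearMap_le_superhedgingCosts
  obtain ⟨γ, _, hγ⟩ := exists_measure_forall_integral_eq_of_tight
    (.mk₀ Λ fun h => apply_nonneg_of_le_superhedgingCosts hΛ) fun ε hε =>
      let ⟨K, hK, hΛK⟩ := exists_isCompact_apply_le_of_le_superhedgingCosts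
        isTightMeasureSet_singleton isTightMeasureSet_singleton hΛ hε
      ⟨K, hK, fun h _ => hΛK h⟩
  refine ⟨γ, isCoupling_of_forall_integral_eq fun φ ψ => ?_,
    lintegral_ofReal_le_of_forall_boundedContinuous_le hc hc0 fun h hh => ?_⟩
  · exact (hγ (φ.compContinuous ⟨Prod.fst, continuous_fst⟩ +
      ψ.compContinuous ⟨Prod.snd, continuous_snd⟩)).trans
        (apply_eq_integral_add_integral_of_le_superhedgingCosts hΛ fun _ _ => rfl)
  · exact (hγ h).trans_le (hΛ h (mem_superhedgingCosts_of_le_cost hh))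

end Kantorovich

section KantorovichRubinstein

variable {X : Type*} [PseudoMetricSpace X]

theorem exists_lipschitzWith_one_le_and_le_neg {φ ψ : X → ℝ}
    (hφψ : ∀ x y, φ x + ψ y ≤ dist x y) : ∃ f, LipschitzWith 1 f ∧ φ ≤ f ∧ f ≤ -ψ := by
  have hle (x y : X) : φ x ≤ dist x y - ψ y := le_sub_iff_add_le.2 (hφψ x y)
  have hbdd (x : X) : BddBelow (Set.range fun y => dist x y - ψ y) :=
    ⟨φ x, Set.forall_mem_range.2 (hle x)⟩
  refine ⟨fun x => ⨅ y, (dist x y - ψ y), .of_le_add fun x x' => ?_, fun x => ?_, fun x => ?_⟩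
  · have : Nonempty X := ⟨x⟩
    rw [← sub_le_iff_le_add]
    refine le_ciInf fun y => ?_
    linarith [ciInf_le (hbdd x) y, dist_triangle x x' y]
  · have : Nonempty X := ⟨x⟩
    exact le_ciInf (hle x)
  · simpa using ciInf_le (hbdd x) x

variable [MeasurableSpace X] {μ ν : Measure X} {γ : Measure (X × X)}

theorem IsCoupling.integral_sub_integral_le (hγ : IsCoupling γ μ ν) {K : ℝ≥0} {f : X → ℝ}
    (hf : LipschitzWith K f) (hfμ : Integrable f μ) (hfν : Integrable f ν)
    (hdist : Integrable (fun z : X × X => dist z.1 z.2) γ) :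
    (∫ x, f x ∂μ) - ∫ x, f x ∂ν ≤ K * ∫ z, dist z.1 z.2 ∂γ := by
  obtain ⟨rfl, rfl⟩ := hγ
  have hf1 : Integrable (fun z : X × X => f z.1) γ := hfμ.comp_measurable measurable_fst
  have hf2 : Integrable (fun z : X × X => f z.2) γ := hfν.comp_measurable measurable_snd
  rw [integral_map measurable_fst.aemeasurable hfμ.aestronglyMeasurable,
    integral_map measurable_snd.aemeasurable hfν.aestronglyMeasurable,
    ← integral_sub hf1 hf2, ← integral_const_mul]
  exact integral_mono (hf1.sub hf2) (hdist.const_mul _) fun z =>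
    (le_abs_self _).trans (hf.dist_le_mul z.1 z.2)

theorem IsCoupling.integrable_dist [OpensMeasurableSpace X] [SecondCountableTopology X]
    (hγ : IsCoupling γ μ ν) {x₀ : X}
    (hμ : Integrable (fun x => dist x x₀) μ) (hν : Integrable (fun x => dist x x₀) ν) :
    Integrable (fun z : X × X => dist z.1 z.2) γ := by
  obtain ⟨rfl, rfl⟩ := hγ
  refine ((hμ.comp_measurable measurable_fst).add (hν.comp_measurable measurable_snd)).mono'
    continuous_dist.aestronglyMeasurable (ae_of_all _ fun z => ?_)
  rw [Real.norm_of_nonneg dist_nonneg]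
  exact dist_triangle_right _ _ _

theorem integrable_of_lipschitzWith [OpensMeasurableSpace X] [IsFiniteMeasure μ]
    {x₀ : X} {K : ℝ≥0} {f : X → ℝ} (hf : LipschitzWith K f)
    (hμ : Integrable (fun x => dist x x₀) μ) : Integrable f μ := by
  refine ((integrable_const ‖f x₀‖).add (hμ.const_mul K)).mono'
    hf.continuous.aestronglyMeasurable (ae_of_all _ fun x => ?_)
  calc ‖f x‖ ≤ ‖f x₀‖ + ‖f x - f x₀‖ := norm_le_norm_add_norm_sub' _ _
    _ ≤ ‖f x₀‖ + K * dist x x₀ := by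
      gcongr
      exact (dist_eq_norm _ _).symm.trans_le (hf.dist_le_mul x x₀)

theorem isDualBound_dist_of_forall_lipschitzWith [OpensMeasurableSpace X] [IsFiniteMeasure μ]
    [IsFiniteMeasure ν] {x₀ : X} {S : ℝ}
    (hμ : Integrable (fun x => dist x x₀) μ) (hν : Integrable (fun x => dist x x₀) ν)
    (hS : ∀ f : X → ℝ, LipschitzWith 1 f → (∫ x, f x ∂μ) - ∫ x, f x ∂ν ≤ S) :
    IsDualBound μ ν (fun z => dist z.1 z.2) S := by
  intro φ ψ hφ hψ hφψ
  obtain ⟨f, hf, hφf, hfψ⟩ := exists_lipschitzWith_one_le_and_le_neg hφψ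
  have hfμ := integrable_of_lipschitzWith hf hμ
  have hfν := integrable_of_lipschitzWith hf hν
  have hψf : ∫ x, ψ x ∂ν ≤ -∫ x, f x ∂ν := by
    rw [← integral_neg]
    exact integral_mono hψ hfν.neg fun x => le_neg_of_le_neg (hfψ x)
  linarith [integral_mono hφ hfμ hφf, hS f hf]

end KantorovichRubinstein

theorem isLeast_integral_dist_coupling {X : Type*} [MetricSpace X] [PolishSpace X]
    [MeasurableSpace X] [BorelSpace X] {μ ν : Measure X} [IsProbabilityMeasure μ]
    [IsProbabilityMeasure ν] {x₀ : X} (hμ : Integrable (fun x => dist x x₀) μ)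
    (hν : Integrable (fun x => dist x x₀) ν) :
    IsLeast {c : ℝ | ∃ γ : Measure (X × X), IsCoupling γ μ ν ∧ c = ∫ z, dist z.1 z.2 ∂γ}
      (sSup {r : ℝ | ∃ f : X → ℝ, LipschitzWith 1 f ∧ r = (∫ x, f x ∂μ) - ∫ x, f x ∂ν}) := by
  set R := {r : ℝ | ∃ f : X → ℝ, LipschitzWith 1 f ∧ r = (∫ x, f x ∂μ) - ∫ x, f x ∂ν}
  have h0 : 0 ∈ R := ⟨0, LipschitzWith.const' 0, by simp⟩
  have hub (γ : Measure (X × X)) (hγ : IsCoupling γ μ ν) :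
      ∫ z, dist z.1 z.2 ∂γ ∈ upperBounds R := by
    rintro _ ⟨f, hf, rfl⟩
    simpa using hγ.integral_sub_integral_le hf (integrable_of_lipschitzWith hf hμ)
      (integrable_of_lipschitzWith hf hν) (hγ.integrable_dist hμ hν)
  have hbdd : BddAbove R := ⟨_, hub (μ.prod ν) ⟨by simp, by simp⟩⟩
  have hdual : IsDualBound μ ν (fun z => dist z.1 z.2) (sSup R) :=
    isDualBound_dist_of_forall_lipschitzWith hμ hν fun f hf => le_csSup hbdd ⟨f, hf, rfl⟩
  obtain ⟨γ, hγ, hγR⟩ :=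
    hdual.exists_isCoupling_lintegral_le continuous_dist fun _ => dist_nonneg
  refine ⟨⟨γ, hγ, (csSup_le ⟨0, h0⟩ (hub γ hγ)).antisymm ?_⟩, ?_⟩
  · rw [integral_eq_lintegral_of_nonneg_ae (ae_of_all _ fun _ => dist_nonneg)
      continuous_dist.aestronglyMeasurable]
    exact ENNReal.toReal_le_of_le_ofReal (le_csSup hbdd h0) hγR
  · rintro _ ⟨γ', hγ', rfl⟩
    exact csSup_le ⟨0, h0⟩ (hub γ' hγ')

theorem totalVariation_sub_le {X : Type*} [MeasurableSpace X] (μ ν : Measure X)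
    [IsFiniteMeasure μ] [IsFiniteMeasure ν] :
    (μ.toSignedMeasure - ν.toSignedMeasure).totalVariation ≤ μ + ν := by
  rw [SignedMeasure.totalVariation_eq_variation]
  exact VectorMeasure.variation_sub_le.trans (by simp)

theorem stmt19_general {X : Type*} [MetricSpace X] [PolishSpace X] [MeasurableSpace X]
    [BorelSpace X] {μ ν : Measure X} [IsProbabilityMeasure μ] [IsProbabilityMeasure ν] (x₀ : X)
    (hmμ : ∫⁻ x, ENNReal.ofReal (dist x x₀) ∂μ ≠ ⊤)
    (hmν : ∫⁻ x, ENNReal.ofReal (dist x x₀) ∂ν ≠ ⊤) :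
    IsLeast {c : ℝ | ∃ γ : Measure (X × X), IsProbabilityMeasure γ ∧ γ.map Prod.fst = μ ∧
        γ.map Prod.snd = ν ∧ c = ∫ z, dist z.1 z.2 ∂γ}
      (sSup {r : ℝ | ∃ f : X → ℝ, LipschitzWith 1 f ∧
        Integrable f ((μ.toSignedMeasure - ν.toSignedMeasure).totalVariation) ∧
        r = (∫ x, f x ∂μ) - ∫ x, f x ∂ν}) := by
  have hint {m : Measure X} (hm : ∫⁻ x, ENNReal.ofReal (dist x x₀) ∂m ≠ ⊤) :
      Integrable (fun x => dist x x₀) m :=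
    (lintegral_ofReal_ne_top_iff_integrable (by fun_prop) (ae_of_all _ fun _ => dist_nonneg)).1 hm
  have hμ := hint hmμ
  have hν := hint hmν
  have hTV {f : X → ℝ} (hf : LipschitzWith 1 f) :
      Integrable f (μ.toSignedMeasure - ν.toSignedMeasure).totalVariation :=
    ((integrable_of_lipschitzWith hf hμ).add_measure
      (integrable_of_lipschitzWith hf hν)).mono_measure (totalVariation_sub_le μ ν)
  convert isLeast_integral_dist_coupling hμ hν using 4 with c r
  · ext γ
    exact ⟨fun ⟨_, hfst, hsnd, hc⟩ => ⟨⟨hfst, hsnd⟩, hc⟩,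
      fun ⟨hγ, hc⟩ => ⟨hγ.isProbabilityMeasure, hγ.map_fst, hγ.map_snd, hc⟩⟩
  · exact exists_congr fun f => and_congr_right fun h => and_iff_right (hTV h)

theorem stmt19 (d : ℕ) (μ ν : Measure (EuclideanSpace ℝ (Fin d)))
    [IsProbabilityMeasure μ] [IsProbabilityMeasure ν]
    (hmμ : ∫⁻ x, ENNReal.ofReal ‖x‖ ∂μ ≠ ⊤)
    (hmν : ∫⁻ x, ENNReal.ofReal ‖x‖ ∂ν ≠ ⊤) :
    Wp 1 μ ν = sSup {r : ℝ | ∃ f : EuclideanSpace ℝ (Fin d) → ℝ,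
      LipschitzWith 1 f ∧
      Integrable f ((μ.toSignedMeasure - ν.toSignedMeasure).totalVariation) ∧
      r = (∫ x, f x ∂μ) - ∫ x, f x ∂ν} := by
  simpa only [Wp, Real.rpow_one, div_one, ← dist_eq_norm] using
    (stmt19_general 0 (by simpa using hmμ) (by simpa using hmν)).csInf_eq
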